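/- Let N = 2n+2 with n ≥ 1, and let ω_k = 2 sin(kπ/N). If multi-indices Θ, θ : {1, …, N−1} → ℤ_{≥0} satisfy Σ_{k=1}^{N−1}(Θ_k + θ_k) = 4, μ(Θ, θ) ≡ 0 (mod N), and ν(Θ, θ) = 0, then θ_k − θ_{N−k} − Θ_k + Θ_{N−k} = 0 for every 1 ≤ k < N/2 and θ_{N/2} − Θ_{N/2} = 0. -/

import Mathlib

open Finset Real

/-- The eigenvalue datum `ν(Θ, θ) = Σ_{k=1}^{N/2−1} ω_k (θ_k − θ_{N−k} − Θ_k + Θ_{N−k})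
+ ω_{N/2}(θ_{N/2} − Θ_{N/2})` for the periodic FPU lattice with `N = 2n+2` particles,
where `ω_k = 2 sin(kπ/N)`.  (So `i·ν(Θ,θ)` are the eigenvalues of `ad_{H₂}` on the
monomials `z^Θ ζ^θ`.) -/
noncomputable def fpuNu (n : ℕ) (Θ θ : ℕ → ℕ) : ℝ :=
  (∑ k ∈ Finset.Icc 1 n, 2 * Real.sin (k * π / (2 * n + 2)) *
      ((θ k : ℝ) - θ (2 * n + 2 - k) - Θ k + Θ (2 * n + 2 - k))) +
    2 * Real.sin ((n + 1) * π / (2 * n + 2)) * ((θ (n + 1) : ℝ) - Θ (n + 1))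

/-- The eigenvalue datum `μ(Θ, θ) = Σ_{k=1}^{N/2−1} k (Θ_k + Θ_{N−k} − θ_k − θ_{N−k})
+ (N/2)(Θ_{N/2} − θ_{N/2})`, regarded modulo `N`, for the periodic FPU lattice with
`N = 2n+2` particles.  (So `e^{2πiμ(Θ,θ)/N}` are the eigenvalues of pullback by the
cyclic symmetry `R` on the monomials `z^Θ ζ^θ`.) -/
def fpuMu (n : ℕ) (Θ θ : ℕ → ℕ) : ℤ :=
  (∑ k ∈ Finset.Icc 1 n, (k : ℤ) *
      ((Θ k : ℤ) + Θ (2 * n + 2 - k) - θ k - θ (2 * n + 2 - k))) +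
    (n + 1 : ℤ) * ((Θ (n + 1) : ℤ) - θ (n + 1))

section Valuation

variable {K Γ₀ : Type*} [Field K] [LinearOrderedCommGroupWithZero Γ₀]

theorem Valuation.map_eq_one_of_pow_eq_one (v : Valuation K Γ₀) {M : ℕ} (hM : M ≠ 0) {x : K}
    (hx : x ^ M = 1) : v x = 1 := by
  have h : v x ^ M = 1 := by rw [← map_pow, hx, map_one]
  exact (pow_eq_one_iff_of_nonneg zero_le hM).1 h

theorem Valuation.one_sub_pow_le (v : Valuation K Γ₀) {x : K} (hx : v x ≤ 1) (i : ℕ) :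
    v (1 - x ^ i) ≤ v (1 - x) := by
  induction i with
  | zero => simp
  | succ i ih =>
    have h : 1 - x ^ (i + 1) = (1 - x ^ i) + x ^ i * (1 - x) := by ring
    rw [h]
    refine v.map_add_le ih ?_
    rw [map_mul, map_pow]
    exact mul_le_of_le_one_left' (pow_le_one' hx i)

theorem Valuation.eq_one_of_odd_pow_eq_one (v : Valuation K Γ₀) (h2 : v 2 < 1) {x : K} {m : ℕ}
    (hm : Odd m) (hx : x ^ m = 1) (hlt : v (1 - x) < 1) : x = 1 := by
  by_contra hne
  have hvx : v x ≤ 1 :=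
    (v.map_eq_one_of_pow_eq_one (by rintro rfl; simp at hm) hx).le
  have hgeom : ∑ i ∈ Finset.range m, x ^ i = 0 := by
    have := mul_geom_sum x m
    rw [hx, sub_self] at this
    exact (mul_eq_zero.1 this).resolve_left (sub_ne_zero.2 hne)
  have hsum : v (∑ i ∈ Finset.range m, (1 - x ^ i)) < 1 :=
    v.map_sum_lt one_ne_zero fun i _ => (v.one_sub_pow_le hvx i).trans_lt hlt
  rw [Finset.sum_sub_distrib, hgeom] at hsum
  obtain ⟨k, rfl⟩ := hm
  have hk : v (k : K) ≤ 1 := by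
    clear * -
    induction k with
    | zero => simp
    | succ k ih => push_cast; exact v.map_add_le ih (by simp)
  have h2k : v (2 * (k : K)) < 1 := by
    rw [map_mul]
    exact (mul_le_of_le_one_right' hk).trans_lt h2
  have h1 : v (((2 * k + 1 : ℕ) : K) - 2 * k) < 1 := v.map_sub_lt (by simpa using hsum) h2k
  simp at h1

theorem Valuation.two_le_one_sub_pow_four_of_two_pow (v : Valuation K Γ₀) (k : ℕ) {x : K}
    (hx : x ^ 2 ^ k = 1) (h4 : x ^ 4 ≠ 1) : v 2 ≤ v (1 - x) ^ 4 := by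
  induction k generalizing x with
  | zero => simp at hx; simp [hx] at h4
  | succ k ih =>
    have hvx : v x ≤ 1 :=
      (v.map_eq_one_of_pow_eq_one (by positivity) hx).le
    by_cases h8 : (x ^ 2) ^ 4 = 1
    · have hm : x ^ 4 = -1 := by
        have : (x ^ 4 - 1) * (x ^ 4 + 1) = 0 := by linear_combination h8
        exact eq_neg_of_add_eq_zero_left
          ((mul_eq_zero.1 this).resolve_left (sub_ne_zero.2 h4))
      have h : (2 : K) = (1 - x) * (1 - x ^ 5) * (1 - x ^ 3) * (1 - x ^ 7) := by
        have e5 : x ^ 5 = -x := by linear_combination x * hm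
        have e7 : x ^ 7 = -x ^ 3 := by linear_combination x ^ 3 * hm
        rw [e5, e7]
        linear_combination (x ^ 2 - x ^ 4 + 1) * hm
      calc v 2 = v (1 - x) * v (1 - x ^ 5) * v (1 - x ^ 3) * v (1 - x ^ 7) := by
            simp only [← map_mul]; rw [← h]
        _ ≤ v (1 - x) * v (1 - x) * v (1 - x) * v (1 - x) := by
            gcongr <;> exact v.one_sub_pow_le hvx _
        _ = v (1 - x) ^ 4 := by simp only [pow_succ, pow_zero, one_mul]
    · refine (ih (x := x ^ 2) (by rw [← pow_mul, ← pow_succ', hx]) h8).trans ?_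
      exact pow_le_pow_left' (v.one_sub_pow_le hvx 2) 4

theorem Valuation.two_le_one_sub_pow_four (v : Valuation K Γ₀) (h2 : v 2 < 1) {M : ℕ} (hM : M ≠ 0)
    {x : K} (hx : x ^ M = 1) (h4 : x ^ 4 ≠ 1) : v 2 ≤ v (1 - x) ^ 4 := by
  have hvx : v x ≤ 1 := (v.map_eq_one_of_pow_eq_one hM hx).le
  rcases lt_or_ge (v (1 - x)) 1 with hlt | hge
  · obtain ⟨k, m, hm, rfl⟩ := Nat.exists_eq_two_pow_mul_odd hM
    refine v.two_le_one_sub_pow_four_of_two_pow k ?_ h4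
    exact v.eq_one_of_odd_pow_eq_one h2 hm (by rw [← pow_mul, hx])
      ((v.one_sub_pow_le hvx _).trans_lt hlt)
  · exact h2.le.trans (one_le_pow_of_one_le' hge 4)

theorem Valuation.two_le_one_sub_sq (v : Valuation K Γ₀) (h2 : v 2 < 1) {M : ℕ} (hM : M ≠ 0)
    {x : K} (hx : x ^ M = 1) (hsq : x ^ 2 ≠ 1) : v 2 ≤ v (1 - x) ^ 2 := by
  have hvx : v x = 1 := v.map_eq_one_of_pow_eq_one hM hx
  by_cases h4 : x ^ 4 = 1
  · have hm : x ^ 2 = -1 := by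
      have : (x ^ 2 - 1) * (x ^ 2 + 1) = 0 := by linear_combination h4
      exact eq_neg_of_add_eq_zero_left
        ((mul_eq_zero.1 this).resolve_left (sub_ne_zero.2 hsq))
    have h : (1 - x) ^ 2 = -(2 * x) := by linear_combination hm
    rw [← map_pow, h, Valuation.map_neg, map_mul, hvx, mul_one]
  · refine (v.two_le_one_sub_pow_four h2 hM hx h4).trans ?_
    exact pow_le_pow_right_of_le_one' (v.map_sub_le (by simp) hvx.le) (by norm_num)

/-- If `α β γ` are roots of unity, none of them `±1` and at most `α` of order four, then the
product `(1 - α) (1 - β) (1 - γ)` has too large an absolute value at `2` to be divisible by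
`2 * δ`, where `δ` vanishes modulo `2` as soon as `α, β, γ` are all congruent to `1`. -/
theorem Valuation.one_sub_mul_one_sub_mul_one_sub_ne (v : Valuation K Γ₀) (h2 : v 2 < 1)
    (h0 : (2 : K) ≠ 0) {M : ℕ} (hM : M ≠ 0) {α β γ δ : K} (hα : α ^ M = 1) (hβ : β ^ M = 1)
    (hγ : γ ^ M = 1) (hα2 : α ^ 2 ≠ 1) (hβ4 : β ^ 4 ≠ 1) (hγ4 : γ ^ 4 ≠ 1) (hδ : v δ ≤ 1)
    (hδ1 : v (1 - α) < 1 → v (1 - β) < 1 → v (1 - γ) < 1 → v δ < 1) :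
    (1 - α) * (1 - β) * (1 - γ) ≠ 2 * δ := by
  intro h
  have hle {x : K} (hx : x ^ M = 1) : v (1 - x) ≤ 1 :=
    v.map_sub_le (by simp) (v.map_eq_one_of_pow_eq_one hM hx).le
  have hA := v.two_le_one_sub_sq h2 hM hα hα2
  have hB := v.two_le_one_sub_pow_four h2 hM hβ hβ4
  have hC := v.two_le_one_sub_pow_four h2 hM hγ hγ4
  have hA1 := hle hα
  have hB1 := hle hβ
  have hC1 := hle hγ
  have h' : v (1 - α) * v (1 - β) * v (1 - γ) = v 2 * v δ := by simp only [← map_mul, h]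
  have ht : 0 < v 2 := by simpa [zero_lt_iff] using h0
  generalize v (1 - α) = A at *
  generalize v (1 - β) = B at *
  generalize v (1 - γ) = C at *
  generalize v δ = D at *
  generalize v 2 = t at *
  have hprod : A ^ 4 * B ^ 4 * C ^ 4 = t ^ 4 * D ^ 4 := by
    simp only [← mul_pow, h']
  have hA4 : t ^ 2 ≤ A ^ 4 := by
    calc t ^ 2 ≤ (A ^ 2) ^ 2 := pow_le_pow_left' hA 2
      _ = A ^ 4 := by rw [← pow_mul]
  have hlow : t ^ 4 ≤ t ^ 4 * D ^ 4 := by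
    calc t ^ 4 = t ^ 2 * t * t := by simp only [pow_succ, pow_zero, one_mul, mul_assoc]
      _ ≤ A ^ 4 * B ^ 4 * C ^ 4 := by gcongr
      _ = _ := hprod
  have hup : t ^ 4 * D ^ 4 ≤ t ^ 4 := mul_le_of_le_one_right' (pow_le_one' hδ 4)
  have hD : D = 1 := by
    have h4 : t ^ 4 * D ^ 4 = t ^ 4 * 1 := by rw [mul_one]; exact hup.antisymm hlow
    exact (pow_eq_one_iff_of_nonneg zero_le (by norm_num)).1 (mul_left_cancel₀ (pow_pos ht 4).ne' h4)
  rw [hD, one_pow, mul_one] at hprod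
  have ht43 : t ^ 4 < t ^ 3 := pow_lt_pow_right_of_lt_one₀ ht h2 (by norm_num)
  have ht42 : t ^ 4 < t ^ 2 := pow_lt_pow_right_of_lt_one₀ ht h2 (by norm_num)
  refine (hδ1 ?_ ?_ ?_).ne hD
  · refine lt_of_le_of_ne hA1 ?_
    rintro rfl
    refine ht42.not_ge (hprod ▸ ?_)
    calc t ^ 2 = 1 ^ 4 * t * t := by rw [one_pow, one_mul, pow_two]
      _ ≤ 1 ^ 4 * B ^ 4 * C ^ 4 := by gcongr
  · refine lt_of_le_of_ne hB1 ?_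
    rintro rfl
    refine ht43.not_ge (hprod ▸ ?_)
    calc t ^ 3 = t ^ 2 * 1 ^ 4 * t := by rw [one_pow, mul_one, pow_succ]
      _ ≤ A ^ 4 * 1 ^ 4 * C ^ 4 := by gcongr
  · refine lt_of_le_of_ne hC1 ?_
    rintro rfl
    refine ht43.not_ge (hprod ▸ ?_)
    calc t ^ 3 = t ^ 2 * t * 1 ^ 4 := by rw [one_pow, mul_one, pow_succ]
      _ ≤ A ^ 4 * B ^ 4 * 1 ^ 4 := by gcongr

end Valuation

theorem exists_valuationSubring_two_lt_one (K : Type*) [Field K] [CharZero K] :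
    ∃ V : ValuationSubring K, V.valuation 2 < 1 := by
  have hI : Ideal.span {(2 : (⊥ : Subring K))} ≠ ⊤ := by
    rw [Ne, Ideal.eq_top_iff_one, Ideal.mem_span_singleton]
    rintro ⟨⟨a, ha⟩, h⟩
    obtain ⟨m, rfl⟩ := Subring.mem_bot.1 ha
    have h' : (1 : K) = 2 * (m : K) := congrArg Subtype.val h
    have : (1 : ℤ) = 2 * m := by exact_mod_cast h'
    omega
  obtain ⟨V, -, hV⟩ := Ideal.image_subset_nonunits_valuationSubring _ hI
  exact ⟨V, V.mem_nonunits_iff.1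
    (hV ⟨2, Ideal.mem_span_singleton_self _, rfl⟩)⟩

/-- Roots of unity `X, Y, Z` with `X + Y - Z - X * Y * Z` equal to its conjugate. -/
theorem sq_eq_neg_one_of_one_sub_mul_eq {K : Type*} [Field K] [CharZero K] {M : ℕ} (hM : M ≠ 0)
    {X Y Z : K} (hX : X ^ M = 1) (hY : Y ^ M = 1) (hZ : Z ^ M = 1)
    (hXY : (X * Y) ^ 2 ≠ 1) (hYZ : (Y * Z) ^ 2 ≠ 1) (hXZ : (X * Z) ^ 2 ≠ 1)
    (h : (1 - X * Y) * (1 - Y * Z) * (1 - X * Z) = 2 * (X * Y * (Z ^ 2 - 1))) :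
    ((X * Y) ^ 2 = -1 ∧ (Y * Z) ^ 2 = -1) ∨ ((X * Y) ^ 2 = -1 ∧ (X * Z) ^ 2 = -1) ∨
      ((Y * Z) ^ 2 = -1 ∧ (X * Z) ^ 2 = -1) := by
  obtain ⟨V, h2⟩ := exists_valuationSubring_two_lt_one K
  have hv {x : K} (hx : x ^ M = 1) : V.valuation x = 1 :=
    V.valuation.map_eq_one_of_pow_eq_one hM hx
  have hp {x y : K} (hx : x ^ M = 1) (hy : y ^ M = 1) : (x * y) ^ M = 1 := by
    rw [mul_pow, hx, hy, one_mul]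
  have h4 {x : K} (hx : x ^ 2 ≠ 1) (hx' : x ^ 2 ≠ -1) : x ^ 4 ≠ 1 := by
    intro h
    have : (x ^ 2 - 1) * (x ^ 2 + 1) = 0 := by linear_combination h
    rcases mul_eq_zero.1 this with h | h
    · exact hx (sub_eq_zero.1 h)
    · exact hx' (eq_neg_of_add_eq_zero_left h)
  have hδ : V.valuation (X * Y * (Z ^ 2 - 1)) ≤ 1 := by
    rw [map_mul, hv (hp hX hY), one_mul]
    exact Valuation.map_sub_le _ (by rw [map_pow, hv hZ, one_pow]) (by simp)
  have hδ1 (ha : V.valuation (1 - X * Y) < 1) (hb : V.valuation (1 - Y * Z) < 1)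
      (hc : V.valuation (1 - X * Z) < 1) : V.valuation (X * Y * (Z ^ 2 - 1)) < 1 := by
    have e : X * Y * (Z ^ 2 - 1) = (1 - X * Y) - (1 - Y * Z) - Y * Z * (1 - X * Z) := by ring
    rw [e]
    refine Valuation.map_sub_lt _ (Valuation.map_sub_lt _ ha hb) ?_
    rwa [map_mul, hv (hp hY hZ), one_mul]
  by_contra! hcon
  obtain ⟨c1, c2, c3⟩ := hcon
  by_cases ha : (X * Y) ^ 2 = -1
  · exact V.valuation.one_sub_mul_one_sub_mul_one_sub_ne h2 two_ne_zero hM (hp hX hY) (hp hY hZ)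
      (hp hX hZ) hXY (h4 hYZ (c1 ha)) (h4 hXZ (c2 ha)) hδ hδ1 h
  by_cases hb : (Y * Z) ^ 2 = -1
  · refine V.valuation.one_sub_mul_one_sub_mul_one_sub_ne h2 two_ne_zero hM (hp hY hZ) (hp hX hY)
      (hp hX hZ) hYZ (h4 hXY ha) (h4 hXZ (c3 hb)) hδ (fun p q r => hδ1 q p r) ?_
    rw [← h]; ring
  · refine V.valuation.one_sub_mul_one_sub_mul_one_sub_ne h2 two_ne_zero hM (hp hX hZ) (hp hX hY)
      (hp hY hZ) hXZ (h4 hXY ha) (h4 hYZ hb) hδ (fun p q r => hδ1 q r p) ?_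
    rw [← h]; ring

theorem Complex.exp_mul_I_sq_ne_one {t : ℝ} (h0 : 0 < t) (hπ : t < π) :
    Complex.exp (t * Complex.I) ^ 2 ≠ 1 := by
  intro h
  rw [← Complex.exp_nat_mul] at h
  have hre := congrArg Complex.re h
  rw [show ((2 : ℕ) : ℂ) * (t * Complex.I) = ((2 * t : ℝ) : ℂ) * Complex.I by push_cast; ring,
    Complex.exp_ofReal_mul_I_re, Complex.one_re, Real.cos_two_mul] at hre
  nlinarith [Real.sin_sq_add_cos_sq t, pow_pos (Real.sin_pos_of_pos_of_lt_pi h0 hπ) 2]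

theorem Complex.eq_pi_div_two_of_exp_mul_I_sq_eq_neg_one {t : ℝ} (h0 : 0 < t) (hπ : t < π)
    (h : Complex.exp (t * Complex.I) ^ 2 = -1) : t = π / 2 := by
  rw [← Complex.exp_nat_mul] at h
  have hre := congrArg Complex.re h
  rw [show ((2 : ℕ) : ℂ) * (t * Complex.I) = ((2 * t : ℝ) : ℂ) * Complex.I by push_cast; ring,
    Complex.exp_ofReal_mul_I_re, Complex.neg_re, Complex.one_re, Real.cos_two_mul] at hre
  have hcos : Real.cos t = 0 := by
    have : Real.cos t ^ 2 = 0 := by linarith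
    exact pow_eq_zero_iff two_ne_zero |>.1 this
  refine Real.injOn_cos ⟨h0.le, hπ.le⟩ ⟨by positivity, by linarith⟩ ?_
  rw [hcos, Real.cos_pi_div_two]

theorem Complex.one_sub_exp_mul_eq_of_sin_add_sin {x y z : ℝ}
    (h : Real.sin x + Real.sin y = Real.sin z + Real.sin (x + y + z)) :
    (1 - Complex.exp (x * Complex.I) * Complex.exp (y * Complex.I)) *
        (1 - Complex.exp (y * Complex.I) * Complex.exp (z * Complex.I)) *
        (1 - Complex.exp (x * Complex.I) * Complex.exp (z * Complex.I)) =
      2 * (Complex.exp (x * Complex.I) * Complex.exp (y * Complex.I) *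
        (Complex.exp (z * Complex.I) ^ 2 - 1)) := by
  have hc : Complex.sin x + Complex.sin y = Complex.sin z + Complex.sin (x + y + z) := by
    exact_mod_cast congrArg Complex.ofReal h
  simp only [Complex.sin, add_mul, neg_add, neg_mul, Complex.exp_add, Complex.exp_neg] at hc
  have hX := Complex.exp_ne_zero (x * Complex.I)
  have hY := Complex.exp_ne_zero (y * Complex.I)
  have hZ := Complex.exp_ne_zero (z * Complex.I)
  generalize Complex.exp (x * Complex.I) = X at *
  generalize Complex.exp (y * Complex.I) = Y at *
  generalize Complex.exp (z * Complex.I) = Z at *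
  have hc' : (X⁻¹ - X) + (Y⁻¹ - Y) - (Z⁻¹ - Z) - (X⁻¹ * Y⁻¹ * Z⁻¹ - X * Y * Z) = 0 := by
    linear_combination (-2 * Complex.I) * hc + ((X⁻¹ - X) + (Y⁻¹ - Y) - (Z⁻¹ - Z)
      - (X⁻¹ * Y⁻¹ * Z⁻¹ - X * Y * Z)) * Complex.I_sq
  have e : X * Y * Z * ((X⁻¹ - X) + (Y⁻¹ - Y) - (Z⁻¹ - Z) - (X⁻¹ * Y⁻¹ * Z⁻¹ - X * Y * Z)) =
      Y * Z * (1 - X ^ 2) + X * Z * (1 - Y ^ 2) - X * Y * (1 - Z ^ 2) -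
        (1 - X ^ 2 * Y ^ 2 * Z ^ 2) := by
    field_simp
  rw [hc', mul_zero] at e
  linear_combination e

/-- For rational multiples `x, y, z` of `π`, the equation `sin x + sin y = sin z + sin (x + y + z)`
has only trivial solutions. -/
theorem Real.eq_or_eq_of_sin_add_sin_eq {M : ℕ} (hM : M ≠ 0) {x y z : ℝ}
    (hxM : Complex.exp (x * Complex.I) ^ M = 1) (hyM : Complex.exp (y * Complex.I) ^ M = 1)
    (hzM : Complex.exp (z * Complex.I) ^ M = 1) (hx : 0 < x) (hy : 0 < y) (hz : 0 < z)
    (hxyz : x + y + z < π) (h : Real.sin x + Real.sin y = Real.sin z + Real.sin (x + y + z)) :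
    x = z ∨ y = z := by
  have hmul (s t : ℝ) : Complex.exp (s * Complex.I) * Complex.exp (t * Complex.I) =
      Complex.exp ((s + t : ℝ) * Complex.I) := by
    rw [← Complex.exp_add]; push_cast; ring_nf
  have key := sq_eq_neg_one_of_one_sub_mul_eq hM hxM hyM hzM
    (by rw [hmul]; exact Complex.exp_mul_I_sq_ne_one (by linarith) (by linarith))
    (by rw [hmul]; exact Complex.exp_mul_I_sq_ne_one (by linarith) (by linarith))
    (by rw [hmul]; exact Complex.exp_mul_I_sq_ne_one (by linarith) (by linarith))
    (Complex.one_sub_exp_mul_eq_of_sin_add_sin h)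
  simp only [hmul] at key
  have hhalf {t : ℝ} (h0 : 0 < t) (hπ : t < π) (ht : Complex.exp (t * Complex.I) ^ 2 = -1) :
      t = π / 2 := Complex.eq_pi_div_two_of_exp_mul_I_sq_eq_neg_one h0 hπ ht
  rcases key with ⟨h1, h2⟩ | ⟨h1, h2⟩ | ⟨h1, h2⟩
  all_goals
    replace h1 := hhalf (by linarith) (by linarith) h1
    replace h2 := hhalf (by linarith) (by linarith) h2
  · left; linarith
  · right; linarith
  · left
    obtain rfl : x = y := by linarith
    rw [show x + x + z = π - z by linarith, Real.sin_pi_sub] at h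
    exact Real.injOn_sin ⟨by linarith, by linarith⟩ ⟨by linarith, by linarith⟩ (by linarith)

theorem Real.eq_or_eq_of_sin_add_sin_eq_sin_add_sin_sub {x y z : ℝ} (hx : 0 < x) (hx' : x ≤ π / 2)
    (hy : 0 < y) (hy' : y ≤ π / 2) (hz : 0 < z) (hz' : z ≤ π / 2)
    (h : Real.sin x + Real.sin y = Real.sin z + Real.sin (x + y - z)) : x = z ∨ y = z := by
  have e : 2 * Real.sin ((x - z) / 2) *
      (-2 * Real.sin ((x + y) / 2) * Real.sin ((z - y) / 2)) = 0 := by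
    have h1 := Real.sin_sub_sin x z
    have h2 := Real.sin_sub_sin (x + y - z) y
    have h3 := Real.cos_sub_cos ((x + z) / 2) ((x + y - z + y) / 2)
    rw [show (x + y - z - y) / 2 = (x - z) / 2 by ring] at h2
    rw [show ((x + z) / 2 + (x + y - z + y) / 2) / 2 = (x + y) / 2 by ring,
      show ((x + z) / 2 - (x + y - z + y) / 2) / 2 = (z - y) / 2 by ring] at h3
    linear_combination h - h1 + h2 - 2 * Real.sin ((x - z) / 2) * h3
  have hxy : Real.sin ((x + y) / 2) ≠ 0 :=
    (Real.sin_pos_of_pos_of_lt_pi (by linarith) (by linarith)).ne'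
  simp only [mul_eq_zero, hxy, or_false, neg_eq_zero, OfNat.ofNat_ne_zero, false_or] at e
  rcases e with e | e
  · rw [Real.sin_eq_zero_iff_of_lt_of_lt (by linarith) (by linarith)] at e
    left; linarith
  · rw [Real.sin_eq_zero_iff_of_lt_of_lt (by linarith) (by linarith)] at e
    right; linarith

theorem Real.abs_sin_add_le_abs_sin_add_abs_sin (x y : ℝ) :
    |Real.sin (x + y)| ≤ |Real.sin x| + |Real.sin y| := by
  rw [Real.sin_add]
  refine (abs_add_le _ _).trans ?_
  rw [abs_mul, abs_mul]
  exact add_le_add (mul_le_of_le_one_right (abs_nonneg _) (Real.abs_cos_le_one y))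
    (mul_le_of_le_one_left (abs_nonneg _) (Real.abs_cos_le_one x))

theorem Real.abs_sin_add_lt_abs_sin_add_abs_sin {x y : ℝ} (hx : Real.sin x ≠ 0)
    (hy : Real.sin y ≠ 0) : |Real.sin (x + y)| < |Real.sin x| + |Real.sin y| := by
  rw [Real.sin_add]
  refine (abs_add_le _ _).trans_lt ?_
  rw [abs_mul, abs_mul]
  refine add_lt_add_of_lt_of_le ?_
    (mul_le_of_le_one_left (abs_nonneg _) (Real.abs_cos_le_one x))
  refine mul_lt_of_lt_one_right (abs_pos.2 hx) ?_
  rw [← sq_lt_one_iff_abs_lt_one]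
  nlinarith [Real.sin_sq_add_cos_sq y, sq_pos_of_ne_zero hy]

section LatticeAngles

variable {n : ℕ}

theorem mul_pi_div_pos {k : ℕ} (h1 : 1 ≤ k) : 0 < (k : ℝ) * π / (2 * n + 2) := by
  have : (0 : ℝ) < k := by exact_mod_cast h1
  positivity

theorem mul_pi_div_le_pi_div_two {k : ℕ} (h : k ≤ n + 1) :
    (k : ℝ) * π / (2 * n + 2) ≤ π / 2 := by
  have : (k : ℝ) ≤ n + 1 := by exact_mod_cast h
  rw [div_le_div_iff₀ (by positivity) two_pos]
  nlinarith [Real.pi_pos]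

theorem sin_mul_pi_div_pos {k : ℕ} (h1 : 1 ≤ k) (h : k ≤ n + 1) :
    0 < Real.sin (k * π / (2 * n + 2)) :=
  Real.sin_pos_of_pos_of_lt_pi (mul_pi_div_pos h1)
    ((mul_pi_div_le_pi_div_two h).trans_lt (by linarith [Real.pi_pos]))

theorem sin_mul_pi_div_inj {k l : ℕ} (hk : k ≤ n + 1) (hl : l ≤ n + 1)
    (h : Real.sin (k * π / (2 * n + 2)) = Real.sin (l * π / (2 * n + 2))) : k = l := by
  have hmem {j : ℕ} (hj : j ≤ n + 1) :
      (j : ℝ) * π / (2 * n + 2) ∈ Set.Icc (-(π / 2)) (π / 2) :=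
    ⟨le_trans (by linarith [Real.pi_pos]) (by positivity : (0 : ℝ) ≤ j * π / (2 * n + 2)),
      mul_pi_div_le_pi_div_two hj⟩
  have h' := Real.injOn_sin (hmem hk) (hmem hl) h
  rw [div_left_inj' (by positivity), mul_left_inj' Real.pi_ne_zero] at h'
  exact_mod_cast h'

theorem exp_mul_pi_div_pow (k : ℕ) :
    Complex.exp (((k * π / (2 * n + 2) : ℝ) : ℂ) * Complex.I) ^ (2 * (2 * n + 2)) = 1 := by
  rw [← Complex.exp_nat_mul, Complex.exp_eq_one_iff]
  refine ⟨k, ?_⟩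
  have : (2 * (n : ℂ) + 2) ≠ 0 := by exact_mod_cast (2 * n + 1).succ_ne_zero
  push_cast
  field_simp

theorem abs_sin_sign_mul (e : ℤ) (he : e = 1 ∨ e = -1) (x : ℝ) :
    |Real.sin (e * x)| = |Real.sin x| := by
  rcases he with rfl | rfl <;> simp

theorem sin_add_sin_add_sin_ne {a b c d : ℕ} (ha : 1 ≤ a ∧ a ≤ n + 1) (hb : 1 ≤ b ∧ b ≤ n + 1)
    (hc : 1 ≤ c ∧ c ≤ n + 1) (hd : 1 ≤ d ∧ d ≤ n + 1) {e₁ e₂ e₃ e₄ : ℤ} (h₁ : e₁ = 1 ∨ e₁ = -1)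
    (h₂ : e₂ = 1 ∨ e₂ = -1) (h₃ : e₃ = 1 ∨ e₃ = -1) (h₄ : e₄ = 1 ∨ e₄ = -1)
    (hdvd : (2 * n + 2 : ℤ) ∣ e₁ * a + e₂ * b + e₃ * c + e₄ * d) :
    Real.sin (a * π / (2 * n + 2)) + Real.sin (b * π / (2 * n + 2)) +
      Real.sin (c * π / (2 * n + 2)) ≠ Real.sin (d * π / (2 * n + 2)) := by
  obtain ⟨m, hm⟩ := hdvd
  have pa := sin_mul_pi_div_pos (n := n) ha.1 ha.2
  have pb := sin_mul_pi_div_pos (n := n) hb.1 hb.2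
  have pc := sin_mul_pi_div_pos (n := n) hc.1 hc.2
  have pd := sin_mul_pi_div_pos (n := n) hd.1 hd.2
  have hmR : (e₁ : ℝ) * a + e₂ * b + e₃ * c + e₄ * d = (2 * n + 2) * m := by exact_mod_cast hm
  have hang : (e₄ : ℝ) * (d * π / (2 * n + 2)) = m * π - ((e₁ : ℝ) * (a * π / (2 * n + 2)) +
      e₂ * (b * π / (2 * n + 2)) + e₃ * (c * π / (2 * n + 2))) := by
    field_simp
    linear_combination hmR
  have hd' := abs_sin_sign_mul e₄ h₄ (d * π / (2 * n + 2))
  rw [hang, Real.sin_int_mul_pi_sub, abs_neg, abs_mul] at hd'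
  rw [abs_zpow, abs_neg, abs_one, one_zpow, one_mul] at hd'
  have ea := abs_sin_sign_mul e₁ h₁ (a * π / (2 * n + 2))
  have eb := abs_sin_sign_mul e₂ h₂ (b * π / (2 * n + 2))
  have ec := abs_sin_sign_mul e₃ h₃ (c * π / (2 * n + 2))
  rw [abs_of_pos pa] at ea
  rw [abs_of_pos pb] at eb
  rw [abs_of_pos pc] at ec
  rw [abs_of_pos pd] at hd'
  have l1 := Real.abs_sin_add_le_abs_sin_add_abs_sin
    ((e₁ : ℝ) * (a * π / (2 * n + 2)) + e₂ * (b * π / (2 * n + 2))) (e₃ * (c * π / (2 * n + 2)))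
  have l2 := Real.abs_sin_add_lt_abs_sin_add_abs_sin
    (x := (e₁ : ℝ) * (a * π / (2 * n + 2))) (y := e₂ * (b * π / (2 * n + 2)))
    (abs_pos.1 (ea ▸ pa)) (abs_pos.1 (eb ▸ pb))
  intro h
  linarith

theorem eq_or_eq_of_sin_lattice_triple {a b c d : ℕ} (ha : 1 ≤ a) (hb : 1 ≤ b) (hc : 1 ≤ c)
    (hlt : a + b + c < 2 * n + 2) (hd : d = a + b + c ∨ d + (a + b + c) = 2 * n + 2)
    (h : Real.sin (a * π / (2 * n + 2)) + Real.sin (b * π / (2 * n + 2)) =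
      Real.sin (c * π / (2 * n + 2)) + Real.sin (d * π / (2 * n + 2))) : a = c ∨ b = c := by
  have hN : (0 : ℝ) < 2 * n + 2 := by positivity
  have hsum : (a : ℝ) * π / (2 * n + 2) + b * π / (2 * n + 2) + c * π / (2 * n + 2) =
      (a + b + c) * π / (2 * n + 2) := by ring
  have hd' : Real.sin (d * π / (2 * n + 2)) = Real.sin ((a : ℝ) * π / (2 * n + 2) +
      b * π / (2 * n + 2) + c * π / (2 * n + 2)) := by
    rw [hsum]
    rcases hd with hd | hd
    · rw [hd]; push_cast; rfl
    · have hdR : (d : ℝ) + (a + b + c) = 2 * n + 2 := by exact_mod_cast hd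
      rw [← Real.sin_pi_sub]
      congr 1
      field_simp
      linear_combination -hdR
  have hlt' : (a : ℝ) * π / (2 * n + 2) + b * π / (2 * n + 2) + c * π / (2 * n + 2) < π := by
    have : (a : ℝ) + b + c < 2 * n + 2 := by exact_mod_cast hlt
    rw [hsum, div_lt_iff₀ hN, mul_comm]
    exact mul_lt_mul_of_pos_left this Real.pi_pos
  rw [hd'] at h
  have key := Real.eq_or_eq_of_sin_add_sin_eq (M := 2 * (2 * n + 2)) (by positivity)
    (exp_mul_pi_div_pow a) (exp_mul_pi_div_pow b) (exp_mul_pi_div_pow c) (mul_pi_div_pos ha)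
    (mul_pi_div_pos hb) (mul_pi_div_pos hc) hlt' h
  rw [div_left_inj' hN.ne', mul_left_inj' Real.pi_ne_zero, div_left_inj' hN.ne',
    mul_left_inj' Real.pi_ne_zero] at key
  exact_mod_cast key

theorem eq_or_eq_of_sin_lattice_sub {a b c d : ℕ} (ha : 1 ≤ a ∧ a ≤ n + 1)
    (hb : 1 ≤ b ∧ b ≤ n + 1) (hc : 1 ≤ c ∧ c ≤ n + 1)
    (hd : a + b = c + d ∨ a + b + d = c + (2 * n + 2))
    (h : Real.sin (a * π / (2 * n + 2)) + Real.sin (b * π / (2 * n + 2)) =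
      Real.sin (c * π / (2 * n + 2)) + Real.sin (d * π / (2 * n + 2))) : a = c ∨ b = c := by
  have hN : (0 : ℝ) < 2 * n + 2 := by positivity
  have hd' : Real.sin (d * π / (2 * n + 2)) = Real.sin ((a : ℝ) * π / (2 * n + 2) +
      b * π / (2 * n + 2) - c * π / (2 * n + 2)) := by
    rcases hd with hd | hd
    · have hdR : (a : ℝ) + b = c + d := by exact_mod_cast hd
      congr 1
      field_simp
      linear_combination -hdR
    · have hdR : (a : ℝ) + b + d = c + (2 * n + 2) := by exact_mod_cast hd
      rw [← Real.sin_pi_sub]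
      congr 1
      field_simp
      linear_combination -hdR
  rw [hd'] at h
  have key := Real.eq_or_eq_of_sin_add_sin_eq_sin_add_sin_sub (mul_pi_div_pos ha.1)
    (mul_pi_div_le_pi_div_two ha.2) (mul_pi_div_pos hb.1) (mul_pi_div_le_pi_div_two hb.2)
    (mul_pi_div_pos hc.1) (mul_pi_div_le_pi_div_two hc.2) h
  rw [div_left_inj' hN.ne', mul_left_inj' Real.pi_ne_zero, div_left_inj' hN.ne',
    mul_left_inj' Real.pi_ne_zero] at key
  exact_mod_cast key

theorem sin_mul_pi_div_strictMono {k l : ℕ} (hl : l ≤ n + 1) (h : k < l) :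
    Real.sin (k * π / (2 * n + 2)) < Real.sin (l * π / (2 * n + 2)) := by
  refine Real.sin_lt_sin_of_lt_of_le_pi_div_two ?_ (mul_pi_div_le_pi_div_two hl) ?_
  · exact le_trans (by linarith [Real.pi_pos]) (by positivity : (0 : ℝ) ≤ k * π / (2 * n + 2))
  · have : (k : ℝ) < l := by exact_mod_cast h
    gcongr

theorem eq_or_eq_of_sin_lattice_antitone {a b c d : ℕ} (ha : a ≤ n + 1) (hb : b ≤ n + 1)
    (hc : c ≤ n + 1) (hd : d ≤ n + 1) (hs : a + c = b + d)
    (h : Real.sin (a * π / (2 * n + 2)) + Real.sin (b * π / (2 * n + 2)) =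
      Real.sin (c * π / (2 * n + 2)) + Real.sin (d * π / (2 * n + 2))) : a = d := by
  rcases lt_trichotomy a d with hlt | heq | hgt
  · have h1 := sin_mul_pi_div_strictMono hd hlt
    have h2 := sin_mul_pi_div_strictMono (n := n) hc (show b < c by omega)
    linarith
  · exact heq
  · have h1 := sin_mul_pi_div_strictMono ha hgt
    have h2 := sin_mul_pi_div_strictMono (n := n) hb (show c < b by omega)
    linarith

theorem sign_sum_cases {a b c d : ℕ} (ha : 1 ≤ a ∧ a ≤ n + 1) (hb : 1 ≤ b ∧ b ≤ n + 1)
    (hc : 1 ≤ c ∧ c ≤ n + 1) (hd : 1 ≤ d ∧ d ≤ n + 1) {e₁ e₂ e₃ e₄ : ℤ} (h₁ : e₁ = 1 ∨ e₁ = -1)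
    (h₂ : e₂ = 1 ∨ e₂ = -1) (h₃ : e₃ = 1 ∨ e₃ = -1) (h₄ : e₄ = 1 ∨ e₄ = -1)
    (hdvd : (2 * n + 2 : ℤ) ∣ e₁ * a + e₂ * b + e₃ * c + e₄ * d) :
    (a + b = c + d ∨ a + c = b + d ∨ a + d = b + c ∨ a = c) ∨
      (a + b + c + d = 2 * n + 2) ∨
      (a + b + c = d ∨ a + b + d = c ∨ a + c + d = b ∨ b + c + d = a) ∨
      (a + b + c = d + (2 * n + 2) ∨ a + b + d = c + (2 * n + 2) ∨
        a + c + d = b + (2 * n + 2) ∨ b + c + d = a + (2 * n + 2)) := by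
  obtain ⟨m, hm⟩ := hdvd
  have hbd {e : ℤ} (he : e = 1 ∨ e = -1) {k : ℕ} (hk : 1 ≤ k ∧ k ≤ n + 1) :
      e * k ≤ n + 1 ∧ -(n + 1 : ℤ) ≤ e * k := by
    rcases he with rfl | rfl <;> constructor <;> omega
  obtain ⟨ua, la⟩ := hbd h₁ ha
  obtain ⟨ub, lb⟩ := hbd h₂ hb
  obtain ⟨uc, lc⟩ := hbd h₃ hc
  obtain ⟨ud, ld⟩ := hbd h₄ hd
  have hub : m ≤ 2 := by
    have : (2 * n + 2 : ℤ) * m ≤ (2 * n + 2) * 2 := by linarith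
    exact le_of_mul_le_mul_left this (by positivity)
  have hlb : -2 ≤ m := by
    have : (2 * n + 2 : ℤ) * -2 ≤ (2 * n + 2) * m := by linarith
    exact le_of_mul_le_mul_left this (by positivity)
  clear hbd ua la ub lb uc lc ud ld
  rcases h₁ with rfl | rfl <;> rcases h₂ with rfl | rfl <;> rcases h₃ with rfl | rfl <;>
    rcases h₄ with rfl | rfl <;> interval_cases m <;>
    first
    | (exfalso; omega)
    | (refine .inr (.inl ?_); omega)
    | (refine .inl (.inl ?_); omega)
    | (refine .inl (.inr (.inl ?_)); omega)
    | (refine .inl (.inr (.inr (.inl ?_))); omega)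
    | (refine .inl (.inr (.inr (.inr ?_))); omega)
    | (refine .inr (.inr (.inl (.inl ?_))); omega)
    | (refine .inr (.inr (.inl (.inr (.inl ?_)))); omega)
    | (refine .inr (.inr (.inl (.inr (.inr (.inl ?_))))); omega)
    | (refine .inr (.inr (.inl (.inr (.inr (.inr ?_))))); omega)
    | (refine .inr (.inr (.inr (.inl ?_))); omega)
    | (refine .inr (.inr (.inr (.inr (.inl ?_)))); omega)
    | (refine .inr (.inr (.inr (.inr (.inr (.inl ?_))))); omega)
    | (refine .inr (.inr (.inr (.inr (.inr (.inr ?_))))); omega)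

theorem pair_eq_of_sin_add_sin_eq {a b c d : ℕ} (ha : 1 ≤ a ∧ a ≤ n + 1)
    (hb : 1 ≤ b ∧ b ≤ n + 1) (hc : 1 ≤ c ∧ c ≤ n + 1) (hd : 1 ≤ d ∧ d ≤ n + 1) {e₁ e₂ e₃ e₄ : ℤ}
    (h₁ : e₁ = 1 ∨ e₁ = -1) (h₂ : e₂ = 1 ∨ e₂ = -1) (h₃ : e₃ = 1 ∨ e₃ = -1)
    (h₄ : e₄ = 1 ∨ e₄ = -1) (hdvd : (2 * n + 2 : ℤ) ∣ e₁ * a + e₂ * b + e₃ * c + e₄ * d)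
    (h : Real.sin (a * π / (2 * n + 2)) + Real.sin (b * π / (2 * n + 2)) =
      Real.sin (c * π / (2 * n + 2)) + Real.sin (d * π / (2 * n + 2))) :
    (a = c ∧ b = d) ∨ (a = d ∧ b = c) := by
  have hba := (add_comm _ _).trans h
  have hdc := h.trans (add_comm _ _)
  have hcoin : a = c ∨ a = d ∨ b = c ∨ b = d := by
    have hsum := sign_sum_cases ha hb hc hd h₁ h₂ h₃ h₄ hdvd
    clear hdvd h₁ h₂ h₃ h₄
    rcases hsum with
      (hs | hs | hs | hs) | hs | (hs | hs | hs | hs) | (hs | hs | hs | hs)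
    · have := eq_or_eq_of_sin_lattice_sub ha hb hc (.inl hs) h
      omega
    · have := eq_or_eq_of_sin_lattice_antitone ha.2 hb.2 hc.2 hd.2 hs h
      omega
    · have := eq_or_eq_of_sin_lattice_antitone ha.2 hb.2 hd.2 hc.2 hs hdc
      omega
    · exact .inl hs
    · have := eq_or_eq_of_sin_lattice_triple ha.1 hb.1 hc.1 (by omega) (.inr (by omega)) h
      omega
    · have := eq_or_eq_of_sin_lattice_triple ha.1 hb.1 hc.1 (by omega) (.inl hs.symm) h
      omega
    · have := eq_or_eq_of_sin_lattice_triple ha.1 hb.1 hd.1 (by omega) (.inl hs.symm) hdc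
      omega
    · have := eq_or_eq_of_sin_lattice_triple hc.1 hd.1 ha.1 (by omega) (.inl (by omega)) h.symm
      omega
    · have := eq_or_eq_of_sin_lattice_triple hc.1 hd.1 hb.1 (by omega) (.inl (by omega)) hba.symm
      omega
    · have := eq_or_eq_of_sin_lattice_sub ha hb hd (.inr hs) hdc
      omega
    · have := eq_or_eq_of_sin_lattice_sub ha hb hc (.inr hs) h
      omega
    · have := eq_or_eq_of_sin_lattice_sub hc hd hb (.inr (by omega)) hba.symm
      omega
    · have := eq_or_eq_of_sin_lattice_sub hc hd ha (.inr (by omega)) h.symm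
      omega
  rcases hcoin with rfl | rfl | rfl | rfl
  · exact .inl ⟨rfl, sin_mul_pi_div_inj hb.2 hd.2 (by linarith)⟩
  · exact .inr ⟨rfl, sin_mul_pi_div_inj hb.2 hc.2 (by linarith)⟩
  · exact .inr ⟨sin_mul_pi_div_inj ha.2 hd.2 (by linarith), rfl⟩
  · exact .inl ⟨sin_mul_pi_div_inj ha.2 hc.2 (by linarith), rfl⟩

end LatticeAngles

theorem Finset.sum_Icc_one_two_mul_add_one {M : Type*} [AddCommMonoid M] (n : ℕ) (G : ℕ → M) :
    ∑ k ∈ Finset.Icc 1 (2 * n + 1), G k =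
      ∑ k ∈ Finset.Icc 1 n, (G k + G (2 * n + 2 - k)) + G (n + 1) := by
  have hrefl : ∑ k ∈ Finset.Icc (n + 2) (2 * n + 1), G k =
      ∑ k ∈ Finset.Icc 1 n, G (2 * n + 2 - k) := by
    refine Finset.sum_bij' (fun k _ => 2 * n + 2 - k) (fun k _ => 2 * n + 2 - k) ?_ ?_ ?_ ?_ ?_ <;>
      intro k hk <;> rw [Finset.mem_Icc] at hk
    · rw [Finset.mem_Icc]; omega
    · rw [Finset.mem_Icc]; omega
    · omega
    · omega
    · congr 1; omega
  have hsplit : Finset.Icc 1 (2 * n + 1) =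
      insert (n + 1) (Finset.Icc 1 n ∪ Finset.Icc (n + 2) (2 * n + 1)) := by
    ext k; simp only [Finset.mem_insert, Finset.mem_union, Finset.mem_Icc]; omega
  rw [hsplit, Finset.sum_insert, Finset.sum_union, hrefl, Finset.sum_add_distrib, add_comm]
  · rw [Finset.disjoint_left]
    intro k; simp only [Finset.mem_Icc]; omega
  · simp only [Finset.mem_union, Finset.mem_Icc]; omega

/-- The factors of the monomial `z^Θ ζ^θ`, with multiplicity; the flag is `true` for `ζ`. -/
def monomialFactors (n : ℕ) (Θ θ : ℕ → ℕ) : Multiset (ℕ × Bool) :=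
  ∑ k ∈ Finset.Icc 1 (2 * n + 1), (Θ k • {(k, false)} + θ k • {(k, true)})

/-- The frequency index of the mode `k`, namely the smaller of `k` and `N - k`. -/
def modeIndex (n : ℕ) (p : ℕ × Bool) : ℕ := min p.1 (2 * n + 2 - p.1)

/-- The sign with which a factor contributes its frequency to `ν`. -/
def nuSign (n : ℕ) (p : ℕ × Bool) : ℤ :=
  (if p.2 then 1 else -1) * if p.1 ≤ n + 1 then 1 else -1

/-- The sign with which a factor contributes its frequency index to `μ`. -/
def muSign (p : ℕ × Bool) : ℤ := if p.2 then -1 else 1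

theorem card_monomialFactors (n : ℕ) (Θ θ : ℕ → ℕ) :
    (monomialFactors n Θ θ).card = ∑ k ∈ Finset.Icc 1 (2 * n + 1), (Θ k + θ k) := by
  simp [monomialFactors]

theorem modeIndex_mem_of_mem {n : ℕ} {Θ θ : ℕ → ℕ} {p : ℕ × Bool}
    (hp : p ∈ monomialFactors n Θ θ) : 1 ≤ modeIndex n p ∧ modeIndex n p ≤ n + 1 := by
  obtain ⟨k, hk, hp⟩ := Multiset.mem_sum.1 hp
  have : p.1 = k := by
    rcases Multiset.mem_add.1 hp with h | h <;>
      rw [Multiset.mem_singleton.1 (Multiset.mem_of_mem_nsmul h)]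
  rw [Finset.mem_Icc] at hk
  rw [modeIndex, this]
  omega

theorem nuSign_eq (n : ℕ) (p : ℕ × Bool) : nuSign n p = 1 ∨ nuSign n p = -1 := by
  unfold nuSign; split_ifs <;> simp

theorem muSign_eq (p : ℕ × Bool) : muSign p = 1 ∨ muSign p = -1 := by
  unfold muSign; split_ifs <;> simp

theorem sum_map_monomialFactors {M : Type*} [AddCommMonoid M] (n : ℕ) (Θ θ : ℕ → ℕ)
    (F : ℕ × Bool → M) : ((monomialFactors n Θ θ).map F).sum =
      ∑ k ∈ Finset.Icc 1 (2 * n + 1), (Θ k • F (k, false) + θ k • F (k, true)) := by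
  refine (map_sum (Multiset.sumAddMonoidHom.comp (Multiset.mapAddMonoidHom F)) _ _).trans
    (Finset.sum_congr rfl fun k _ => ?_)
  simp [Multiset.map_nsmul, Multiset.sum_nsmul]

theorem sum_map_nuSign {R : Type*} [CommRing R] (n : ℕ) (Θ θ : ℕ → ℕ) (f : ℕ → R) :
    ((monomialFactors n Θ θ).map fun p => (nuSign n p : R) * f (modeIndex n p)).sum =
      ∑ k ∈ Finset.Icc 1 n,
        f k * ((θ k : R) - θ (2 * n + 2 - k) - Θ k + Θ (2 * n + 2 - k)) +
      f (n + 1) * ((θ (n + 1) : R) - Θ (n + 1)) := by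
  rw [sum_map_monomialFactors, Finset.sum_Icc_one_two_mul_add_one]
  congr 1
  · refine Finset.sum_congr rfl fun k hk => ?_
    rw [Finset.mem_Icc] at hk
    have h1 : min k (2 * n + 2 - k) = k := by omega
    have h2 : min (2 * n + 2 - k) (2 * n + 2 - (2 * n + 2 - k)) = k := by omega
    have h3 : k ≤ n + 1 := by omega
    have h4 : ¬ 2 * n + 2 - k ≤ n + 1 := by omega
    simp only [nuSign, modeIndex, h1, h2, h3, h4, if_true, if_false, nsmul_eq_mul]
    simp
    ring
  · have h1 : min (n + 1) (2 * n + 2 - (n + 1)) = n + 1 := by omega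
    simp only [nuSign, modeIndex, h1, le_refl, if_true, nsmul_eq_mul]
    simp
    ring

theorem sum_map_muSign (n : ℕ) (Θ θ : ℕ → ℕ) :
    ((monomialFactors n Θ θ).map fun p => muSign p * (modeIndex n p : ℤ)).sum =
      fpuMu n Θ θ := by
  rw [sum_map_monomialFactors, Finset.sum_Icc_one_two_mul_add_one, fpuMu]
  congr 1
  · refine Finset.sum_congr rfl fun k hk => ?_
    rw [Finset.mem_Icc] at hk
    have h1 : min k (2 * n + 2 - k) = k := by omega
    have h2 : min (2 * n + 2 - k) (2 * n + 2 - (2 * n + 2 - k)) = k := by omega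
    simp only [muSign, modeIndex, h1, h2, nsmul_eq_mul]
    simp
    ring
  · have h1 : min (n + 1) (2 * n + 2 - (n + 1)) = n + 1 := by omega
    simp only [muSign, modeIndex, h1, nsmul_eq_mul]
    simp
    ring

theorem sum_sign_mul_eq_zero {n a b c d : ℕ} (ha : 1 ≤ a ∧ a ≤ n + 1)
    (hb : 1 ≤ b ∧ b ≤ n + 1) (hc : 1 ≤ c ∧ c ≤ n + 1) (hd : 1 ≤ d ∧ d ≤ n + 1)
    {e₁ e₂ e₃ e₄ s₁ s₂ s₃ s₄ : ℤ} (h₁ : e₁ = 1 ∨ e₁ = -1) (h₂ : e₂ = 1 ∨ e₂ = -1)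
    (h₃ : e₃ = 1 ∨ e₃ = -1) (h₄ : e₄ = 1 ∨ e₄ = -1) (t₁ : s₁ = 1 ∨ s₁ = -1)
    (t₂ : s₂ = 1 ∨ s₂ = -1) (t₃ : s₃ = 1 ∨ s₃ = -1) (t₄ : s₄ = 1 ∨ s₄ = -1)
    (hdvd : (2 * n + 2 : ℤ) ∣ e₁ * a + e₂ * b + e₃ * c + e₄ * d)
    (h : (s₁ : ℝ) * Real.sin (a * π / (2 * n + 2)) + s₂ * Real.sin (b * π / (2 * n + 2)) +
      s₃ * Real.sin (c * π / (2 * n + 2)) + s₄ * Real.sin (d * π / (2 * n + 2)) = 0)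
    (f : ℕ → ℤ) : s₁ * f a + s₂ * f b + s₃ * f c + s₄ * f d = 0 := by
  have pa := sin_mul_pi_div_pos (n := n) ha.1 ha.2
  have pb := sin_mul_pi_div_pos (n := n) hb.1 hb.2
  have pc := sin_mul_pi_div_pos (n := n) hc.1 hc.2
  have pd := sin_mul_pi_div_pos (n := n) hd.1 hd.2
  have d₃ : (2 * n + 2 : ℤ) ∣ e₁ * a + e₂ * b + e₄ * d + e₃ * c := by
    rwa [add_right_comm]
  have d₂ : (2 * n + 2 : ℤ) ∣ e₁ * a + e₃ * c + e₄ * d + e₂ * b := by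
    convert hdvd using 1; ring
  have d₁ : (2 * n + 2 : ℤ) ∣ e₂ * b + e₃ * c + e₄ * d + e₁ * a := by
    convert hdvd using 1; ring
  have dac : (2 * n + 2 : ℤ) ∣ e₁ * a + e₃ * c + e₂ * b + e₄ * d := by
    convert hdvd using 1; ring
  have dad : (2 * n + 2 : ℤ) ∣ e₁ * a + e₄ * d + e₂ * b + e₃ * c := by
    convert hdvd using 1; ring
  have n₄ := sin_add_sin_add_sin_ne ha hb hc hd h₁ h₂ h₃ h₄ hdvd
  have n₃ := sin_add_sin_add_sin_ne ha hb hd hc h₁ h₂ h₄ h₃ d₃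
  have n₂ := sin_add_sin_add_sin_ne ha hc hd hb h₁ h₃ h₄ h₂ d₂
  have n₁ := sin_add_sin_add_sin_ne hb hc hd ha h₂ h₃ h₄ h₁ d₁
  have qb := pair_eq_of_sin_add_sin_eq ha hb hc hd h₁ h₂ h₃ h₄ hdvd
  have qc := pair_eq_of_sin_add_sin_eq ha hc hb hd h₁ h₃ h₂ h₄ dac
  have qd := pair_eq_of_sin_add_sin_eq ha hd hb hc h₁ h₄ h₂ h₃ dad
  rcases t₁ with rfl | rfl <;> rcases t₂ with rfl | rfl <;> rcases t₃ with rfl | rfl <;>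
    rcases t₄ with rfl | rfl <;> push_cast at h <;>
    first
    | (exfalso; linarith)
    | exact absurd (by linarith) n₁
    | exact absurd (by linarith) n₂
    | exact absurd (by linarith) n₃
    | exact absurd (by linarith) n₄
    | (refine (qb (by linarith)).elim ?_ ?_ <;> rintro ⟨rfl, rfl⟩ <;> ring1)
    | (refine (qc (by linarith)).elim ?_ ?_ <;> rintro ⟨rfl, rfl⟩ <;> ring1)
    | (refine (qd (by linarith)).elim ?_ ?_ <;> rintro ⟨rfl, rfl⟩ <;> ring1)

/-- **Quartic symmetric resonant monomials are trivial.**  If multi-indices `Θ, θ` of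
total degree `4` satisfy `μ(Θ, θ) ≡ 0 (mod N)` and `ν(Θ, θ) = 0`, then
`θ_k − θ_{N−k} − Θ_k + Θ_{N−k} = 0` for `1 ≤ k < N/2` and `θ_{N/2} = Θ_{N/2}`. -/
theorem quartic_symmetric_resonances_trivial (n : ℕ) (hn : 1 ≤ n) (Θ θ : ℕ → ℕ)
    (hdeg : (∑ k ∈ Finset.Icc 1 (2 * n + 1), (Θ k + θ k)) = 4)
    (hmu : (2 * n + 2 : ℤ) ∣ fpuMu n Θ θ)
    (hnu : fpuNu n Θ θ = 0) :
    (∀ k ∈ Finset.Icc 1 n,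
      (θ k : ℤ) - θ (2 * n + 2 - k) - Θ k + Θ (2 * n + 2 - k) = 0) ∧
    (θ (n + 1) : ℤ) - Θ (n + 1) = 0 := by
  obtain ⟨p, q, r, s, hS⟩ := Multiset.card_eq_four.1 ((card_monomialFactors n Θ θ).trans hdeg)
  have hmem {x : ℕ × Bool} (hx : x ∈ ({p, q, r, s} : Multiset (ℕ × Bool))) :=
    modeIndex_mem_of_mem (hS ▸ hx)
  have hν := sum_map_nuSign n Θ θ fun k => 2 * Real.sin (k * π / (2 * n + 2))
  have hmid : ((n + 1 : ℕ) : ℝ) = n + 1 := by push_cast; rfl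
  rw [hmid, ← fpuNu, hnu, hS] at hν
  rw [← sum_map_muSign, hS] at hmu
  simp only [Multiset.insert_eq_cons, Multiset.map_cons, Multiset.map_singleton,
    Multiset.sum_cons, Multiset.sum_singleton, ← add_assoc] at hν hmu
  have hzero (f : ℕ → ℤ) : ∑ k ∈ Finset.Icc 1 n,
      f k * ((θ k : ℤ) - θ (2 * n + 2 - k) - Θ k + Θ (2 * n + 2 - k)) +
      f (n + 1) * ((θ (n + 1) : ℤ) - Θ (n + 1)) = 0 := by
    rw [← sum_map_nuSign, hS]
    simp only [Multiset.insert_eq_cons, Multiset.map_cons, Multiset.map_singleton,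
      Multiset.sum_cons, Multiset.sum_singleton, ← add_assoc, Int.cast_id]
    exact sum_sign_mul_eq_zero (hmem (by simp)) (hmem (by simp)) (hmem (by simp))
      (hmem (by simp)) (muSign_eq p) (muSign_eq q) (muSign_eq r) (muSign_eq s)
      (nuSign_eq n p) (nuSign_eq n q) (nuSign_eq n r) (nuSign_eq n s) hmu (by linarith) f
  refine ⟨fun j hj => ?_, ?_⟩
  · have hj' : n + 1 ≠ j := by rw [Finset.mem_Icc] at hj; omega
    simpa [ite_mul, Finset.sum_ite_eq', hj, hj', Finset.mem_Icc.1 hj] using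
      hzero fun k => if k = j then 1 else 0
  · have hsum := Finset.sum_eq_zero (s := Finset.Icc 1 n)
      (f := fun k => (if k = n + 1 then (1 : ℤ) else 0) *
        ((θ k : ℤ) - θ (2 * n + 2 - k) - Θ k + Θ (2 * n + 2 - k))) fun k hk => by
          rw [Finset.mem_Icc] at hk
          rw [if_neg (by omega), zero_mul]
    simpa [hsum] using hzero fun k => if k = n + 1 then 1 else 0
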